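/- arXiv:math/0012063 — 3 statements merged into one kernel-verified Lean document; each statement's English description precedes it below -/
import Mathlib

section
/- The field of constants of F⟨Y_{ij}⟩ coincides with the field of constants of F: for every u ∈ L, D_L(u) = 0 if and only if there exists c ∈ F with d(c) = 0 and u = algebraMap F L c (composing F → A → L). -/
open MvPolynomial

/-- The ring of differential polynomials `A = F{Y_ij}`: multivariate polynomials over `F`
in the variables `Y i j k` (with `Y i j := Y i j 0`). -/
abbrev Agen (F : Type*) [Field F] (n : ℕ) : Type _ :=
  MvPolynomial (Fin n × Fin n × ℕ) F

namespace MvPolynomial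

variable {σ R : Type*}

theorem degreeOf_pderiv_lt [CommSemiring R] {i : σ} {p : MvPolynomial σ R}
    (h : pderiv i p ≠ 0) : degreeOf i (pderiv i p) < degreeOf i p := by
  have key : ∀ m ∈ (pderiv i p).support, m i < degreeOf i p := by
    intro m hm
    rw [mem_support_iff, coeff_pderiv] at hm
    have := degreeOf_le_iff.mp (le_refl (degreeOf i p)) (m + Finsupp.single i 1)
      (mem_support_iff.mpr (left_ne_zero_of_mul hm))
    simpa using this
  obtain ⟨m, hm⟩ := support_nonempty.mpr h
  exact (degreeOf_lt_iff ((Nat.zero_le _).trans_lt (key m hm))).mpr key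

theorem pderiv_eq_zero_of_dvd [CommRing R] [IsDomain R] {i : σ} {p : MvPolynomial σ R}
    (h : p ∣ pderiv i p) : pderiv i p = 0 := by
  by_contra hne
  obtain ⟨q, hq⟩ := h
  have hlt := degreeOf_pderiv_lt hne
  have hpq : p * q ≠ 0 := hq ▸ hne
  rw [hq, degreeOf_mul_eq (left_ne_zero_of_mul hpq) (right_ne_zero_of_mul hpq)] at hlt
  omega

theorem eq_C_of_pderiv_eq_zero [CommRing R] [IsDomain R] [CharZero R] {p : MvPolynomial σ R}
    (h : ∀ i, pderiv i p = 0) : p = C (coeff 0 p) := by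
  rw [← totalDegree_eq_zero_iff_eq_C, totalDegree_eq_zero_iff]
  intro m hm i
  by_contra hi
  have hcoeff : coeff (m - Finsupp.single i 1) (pderiv i p) = 0 := by simp [h i]
  rw [coeff_pderiv, tsub_add_cancel_of_le
    (Finsupp.single_le_iff.mpr (Nat.one_le_iff_ne_zero.mpr hi))] at hcoeff
  exact mul_ne_zero (mem_support_iff.mp hm) (Nat.cast_add_one_ne_zero _) hcoeff

end MvPolynomial

section DifferentialPolynomials

variable {F : Type*} [Field F] {d : F → F} {n : ℕ} {D : Agen F n → Agen F n}

/-- The commutator of `∂/∂Y_{ij,k+1}` with the derivation `D` is `∂/∂Y_{ij,k}`. -/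
theorem pderiv_succ_derivation
    (hD_add : ∀ a b, D (a + b) = D a + D b)
    (hD_mul : ∀ a b, D (a * b) = D a * b + a * D b)
    (hD_C : ∀ f : F, D (C f) = C (d f))
    (hD_Y : ∀ (i j : Fin n) (k : ℕ), D (X (i, j, k)) = X (i, j, k + 1))
    (i j : Fin n) (k : ℕ) (p : Agen F n) :
    pderiv (i, j, k + 1) (D p) = D (pderiv (i, j, k + 1) p) + pderiv (i, j, k) p := by
  have hD_zero : D 0 = 0 := by simpa using hD_add 0 0
  have hD_one : D 1 = 0 := by simpa using hD_mul 1 1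
  induction p using MvPolynomial.induction_on with
  | C a => simp [hD_C, hD_zero]
  | add p q hp hq =>
    simp only [hD_add, map_add, hp, hq]
    ring
  | mul_X p v hp =>
    obtain ⟨i', j', k'⟩ := v
    have hX : pderiv (i, j, k + 1) (D (X (i', j', k'))) =
        D (pderiv (i, j, k + 1) (X (i', j', k'))) + pderiv (i, j, k) (X (i', j', k')) := by
      have hD_pderiv : D (pderiv (i, j, k + 1) (X (i', j', k'))) = 0 := by
        rw [pderiv_X, Pi.single_apply]
        split_ifs <;> assumption
      rw [hD_pderiv, hD_Y]
      simp [pderiv_X, Pi.single_apply]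
    rw [hD_mul]
    simp only [map_add, pderiv_mul, hD_add, hD_mul, hp, hX]
    ring

theorem eq_C_of_dvd_derivation [CharZero F]
    (hD_add : ∀ a b, D (a + b) = D a + D b)
    (hD_mul : ∀ a b, D (a * b) = D a * b + a * D b)
    (hD_C : ∀ f : F, D (C f) = C (d f))
    (hD_Y : ∀ (i j : Fin n) (k : ℕ), D (X (i, j, k)) = X (i, j, k + 1))
    {p : Agen F n} (h : p ∣ D p) : p = C (coeff 0 p) := by
  have hD_zero : D 0 = 0 := by simpa using hD_add 0 0
  apply eq_C_of_pderiv_eq_zero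
  rintro ⟨i, j, k⟩
  have step : ∀ k, pderiv (i, j, k + 1) p = 0 → pderiv (i, j, k) p = 0 := by
    intro k hk
    apply pderiv_eq_zero_of_dvd
    obtain ⟨q, hq⟩ := h
    have hcomm := pderiv_succ_derivation hD_add hD_mul hD_C hD_Y i j k p
    rw [hk, hD_zero, zero_add, hq, pderiv_mul, hk, zero_mul, zero_add] at hcomm
    exact ⟨_, hcomm.symm⟩
  obtain ⟨K, hK⟩ := (p.vars.image fun v => v.2.2).exists_nat_subset_range
  have hlarge : pderiv (i, j, k + K) p = 0 := by
    apply pderiv_eq_zero_of_notMem_vars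
    intro hv
    have := Finset.mem_range.mp (hK (Finset.mem_image_of_mem _ hv))
    simp at this
  have descend : ∀ l, pderiv (i, j, k + l) p = 0 → pderiv (i, j, k) p = 0 := by
    intro l
    induction l with
    | zero => exact id
    | succ l ih => exact fun hl => ih (step _ hl)
  exact descend K hlarge

end DifferentialPolynomials

/-- The field of constants of `F⟨Y_ij⟩` (the fraction field of `F{Y_ij}`)
coincides with the field of constants of `F`. -/
theorem stmt_4
    {F : Type*} [Field F] [CharZero F] (d : F → F)
    (hd_add : ∀ a b : F, d (a + b) = d a + d b)
    (hd_mul : ∀ a b : F, d (a * b) = d a * b + a * d b)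
    (n : ℕ) (hn : 1 ≤ n)
    (D : Agen F n → Agen F n)
    (hD_add : ∀ a b, D (a + b) = D a + D b)
    (hD_mul : ∀ a b, D (a * b) = D a * b + a * D b)
    (hD_C : ∀ f : F, D (C f) = C (d f))
    (hD_Y : ∀ (i j : Fin n) (k : ℕ),
      D (X (i, j, k)) = X (i, j, k + 1))
    (DL : FractionRing (Agen F n) → FractionRing (Agen F n))
    (hDL_add : ∀ a b, DL (a + b) = DL a + DL b)
    (hDL_mul : ∀ a b, DL (a * b) = DL a * b + a * DL b)
    (hDL_comp : ∀ a : Agen F n,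
      DL (algebraMap (Agen F n) (FractionRing (Agen F n)) a) =
        algebraMap (Agen F n) (FractionRing (Agen F n)) (D a)) :
    ∀ u : FractionRing (Agen F n), DL u = 0 ↔
      ∃ c : F, d c = 0 ∧
        u = algebraMap (Agen F n) (FractionRing (Agen F n)) (C c) := by
  intro u
  constructor
  · intro hu
    obtain ⟨p, ⟨q, hq⟩, hrel, rfl⟩ :=
      IsFractionRing.exists_reduced_fraction (A := Agen F n) u
    have hq0 : q ≠ 0 := nonZeroDivisors.ne_zero hq
    have hspec := IsLocalization.mk'_spec (FractionRing (Agen F n)) p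
      (⟨q, hq⟩ : nonZeroDivisors (Agen F n))
    generalize IsLocalization.mk' (FractionRing (Agen F n)) p
      (⟨q, hq⟩ : nonZeroDivisors (Agen F n)) = u at hu hspec ⊢
    have hinj := IsFractionRing.injective (Agen F n) (FractionRing (Agen F n))
    have hcross : D p * q = p * D q := by
      apply hinj
      have hDspec := congrArg DL hspec
      rw [hDL_mul, hu, zero_mul, zero_add, hDL_comp, hDL_comp] at hDspec
      rw [map_mul, map_mul, ← hDspec, ← hspec]
      ring
    have hp : p ∣ D p := hrel.dvd_of_dvd_mul_right ⟨D q, hcross⟩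
    have hq' : q ∣ D q := hrel.symm.dvd_of_dvd_mul_left ⟨D p, by rw [← hcross, mul_comm]⟩
    have hpC := eq_C_of_dvd_derivation hD_add hD_mul hD_C hD_Y hp
    have hqC := eq_C_of_dvd_derivation hD_add hD_mul hD_C hD_Y hq'
    have hb : coeff 0 q ≠ 0 := fun hb => hq0 (by rw [hqC, hb, C_0])
    have huC : u = algebraMap (Agen F n) (FractionRing (Agen F n))
        (C (coeff 0 p / coeff 0 q)) := by
      apply mul_right_cancel₀ ((map_ne_zero_iff _ hinj).mpr hq0)
      rw [hspec, ← map_mul]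
      congr 1
      conv_lhs => rw [hpC]
      conv_rhs => rw [hqC]
      rw [coeff_zero_C, ← C_mul, div_mul_cancel₀ _ hb]
    refine ⟨_, ?_, huC⟩
    rw [huC, hDL_comp, hD_C, map_eq_zero_iff _ hinj] at hu
    exact C_eq_zero.mp hu
  · rintro ⟨c, hc, rfl⟩
    rw [hDL_comp, hD_C, hc, C_0, map_zero]
end

section
/- Let p ∈ F[X] be nonzero and q ∈ F{Y} with D(p) = q·p, and let α = lp(p). Then α_{ij} = 0 whenever j ≠ n+1−i; moreover, if α ≠ 0 then α_{i,n+1−i} > 0 for every 1 ≤ i ≤ n. That is, the leading monomial of p is of the form X_{1n}^{α_{1n}}·X_{2,n−1}^{α_{2,n−1}}·⋯·X_{n1}^{α_{n1}}, supported on the antidiagonal. -/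
open MvPolynomial

/-- The polynomial ring `R = F{Y_ij}[X_ij]`: multivariate polynomials over `F` in the
variables `Y i j k` (indexed by `Sum.inl (i,j,k)`) and `X i j` (indexed by `Sum.inr (i,j)`). -/
abbrev Rgen (F : Type*) [Field F] (n : ℕ) : Type _ :=
  MvPolynomial ((Fin n × Fin n × ℕ) ⊕ (Fin n × Fin n)) F

/-- `det[X]`: the determinant of the `n × n` matrix whose `(i,j)` entry is the variable `X i j`. -/
noncomputable def detX (F : Type*) [Field F] (n : ℕ) : Rgen F n :=
  (Matrix.of fun i j : Fin n => X (Sum.inr (i, j))).det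

/-- The `F`-subalgebra `F{Y}` of `R` generated by all the variables `Y i j k`. -/
noncomputable def FY (F : Type*) [Field F] (n : ℕ) : Subalgebra F (Rgen F n) :=
  Algebra.adjoin F (Set.range fun v : Fin n × Fin n × ℕ => X (Sum.inl v))

/-- The `F`-subalgebra `F[X]` of `R` generated by all the variables `X i j`. -/
noncomputable def FX (F : Type*) [Field F] (n : ℕ) : Subalgebra F (Rgen F n) :=
  Algebra.adjoin F (Set.range fun v : Fin n × Fin n => X (Sum.inr v))

/-- Strict degree reverse lexicographic comparison `α < β` of exponent vectors in the
`X`-variables, for the variable ordering `X 1 1 > X 1 2 > ⋯ > X 1 n > X 2 1 > ⋯ > X n n`: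
either the total degree of `α` is smaller, or the total degrees agree and at the last
(rightmost, i.e. smallest) variable where they differ, `α` has the larger exponent. -/
def degRevLexLT {n : ℕ} (α β : (Fin n × Fin n) →₀ ℕ) : Prop :=
  (∑ v : Fin n × Fin n, α v) < (∑ v : Fin n × Fin n, β v) ∨
  ((∑ v : Fin n × Fin n, α v) = (∑ v : Fin n × Fin n, β v) ∧
    ∃ v : Fin n × Fin n, β v < α v ∧
      ∀ w : Fin n × Fin n, (v.1 < w.1 ∨ (v.1 = w.1 ∧ v.2 < w.2)) → α w = β w)

section Polarization

variable {ι F : Type*} [Fintype ι] [Field F]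

/-- The derivation of `F[X]` sending `X i j` to `X l j` and every variable outside row `i` to `0`. -/
noncomputable def rowPolarization (i l : ι) :
    Derivation F (MvPolynomial (ι × ι) F) (MvPolynomial (ι × ι) F) :=
  ∑ j, (X (l, j) : MvPolynomial (ι × ι) F) • pderiv (i, j)

theorem rowPolarization_apply (i l : ι) (p : MvPolynomial (ι × ι) F) :
    rowPolarization i l p = ∑ j, X (l, j) * pderiv (i, j) p := by
  simp only [rowPolarization, ← Derivation.coeFnAddMonoidHom_apply, map_sum, Finset.sum_apply]
  simp [Derivation.coeFnAddMonoidHom_apply]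

variable [DecidableEq ι]

theorem rowPolarization_X (i l a b : ι) :
    rowPolarization i l (X (a, b) : MvPolynomial (ι × ι) F) = if a = i then X (l, b) else 0 := by
  rw [rowPolarization_apply]
  by_cases h : a = i
  · subst h
    simp [pderiv_X, Pi.single_apply]
  · simp [pderiv_X, h]

theorem lie_rowPolarization_self_left {i l : ι} (h : i ≠ l) :
    ⁅rowPolarization (F := F) i i, rowPolarization i l⁆ = -rowPolarization (F := F) i l := by
  ext1 ⟨a, b⟩
  by_cases ha : a = i <;>
    simp [Derivation.commutator_apply, rowPolarization_X, ha, h.symm]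

theorem lie_rowPolarization_swap {i l : ι} (h : i ≠ l) :
    ⁅rowPolarization (F := F) i l, rowPolarization l i⁆ =
      rowPolarization (F := F) l l - rowPolarization i i := by
  ext1 ⟨a, b⟩
  by_cases ha : a = i
  · subst ha
    simp [Derivation.commutator_apply, rowPolarization_X, h]
  · by_cases hb : a = l <;>
      simp [Derivation.commutator_apply, rowPolarization_X, ha, hb, h.symm]

/-- Derivations sharing an eigenvector have a bracket killing it. -/
theorem lie_apply_eq_zero_of_smul {A : Type*} [CommRing A] [Algebra F A] {D₁ D₂ : Derivation F A A}
    {p : A} {a b : F} (h₁ : D₁ p = a • p) (h₂ : D₂ p = b • p) : ⁅D₁, D₂⁆ p = 0 := by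
  rw [Derivation.commutator_apply, h₁, h₂, Derivation.map_smul, Derivation.map_smul, h₁, h₂,
    smul_comm, sub_self]

/-- A common eigenvector of all row polarizations is killed by the off-diagonal ones, and the
diagonal ones share one eigenvalue. -/
theorem exists_rowPolarization_eq {p : MvPolynomial (ι × ι) F}
    (h : ∀ i l : ι, ∃ a : F, rowPolarization i l p = a • p) :
    ∃ c : F, ∀ i l : ι, rowPolarization i l p = if i = l then c • p else 0 := by
  choose e he using h
  have hoff : ∀ i l : ι, i ≠ l → rowPolarization i l p = 0 := fun i l hil => by
    have := lie_apply_eq_zero_of_smul (he i i) (he i l)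
    simpa [lie_rowPolarization_self_left hil] using this
  have hdiag : ∀ i l : ι, rowPolarization l l p = rowPolarization i i p := fun i l => by
    by_cases hil : i = l
    · rw [hil]
    have := lie_apply_eq_zero_of_smul (he i l) (he l i)
    rw [lie_rowPolarization_swap hil] at this
    simpa [sub_eq_zero] using this
  rcases isEmpty_or_nonempty ι with hι | ⟨⟨i₀⟩⟩
  · exact ⟨0, fun i => hι.elim i⟩
  · refine ⟨e i₀ i₀, fun i l => ?_⟩
    split_ifs with hil
    · rw [← hil, hdiag i₀ i, he]
    · exact hoff i l hil

/-- The row polarization equations imply the column polarization equations. -/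
theorem sum_X_mul_pderiv_col {p : MvPolynomial (ι × ι) F} {c : F}
    (h : ∀ i l : ι, rowPolarization i l p = if i = l then c • p else 0) (j k : ι) :
    ∑ i, X (i, k) * pderiv (i, j) p = if j = k then c • p else 0 := by
  let M : Matrix ι ι (MvPolynomial (ι × ι) F) := Matrix.mvPolynomialX ι ι F
  let G : Matrix ι ι (MvPolynomial (ι × ι) F) := Matrix.of fun j i => pderiv (i, j) p
  have hdet : M.det ≠ 0 := Matrix.det_mvPolynomialX_ne_zero ι F
  have hMG : M * G = (c • p) • (1 : Matrix ι ι _) := by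
    ext1 l i
    have := h i l
    rw [rowPolarization_apply] at this
    simp [M, G, Matrix.mul_apply, this, Matrix.one_apply, eq_comm]
  have hGM : M.det • (G * M) = M.det • ((c • p) • (1 : Matrix ι ι _)) := by
    have hN : ∀ N : Matrix ι ι (MvPolynomial (ι × ι) F), M.det • N = M.adjugate * (M * N) := by
      intro N
      rw [← mul_assoc, Matrix.adjugate_mul, Matrix.smul_mul, one_mul]
    rw [hN, hN, ← mul_assoc M G M, hMG]
    simp
  have := congrFun (congrFun (smul_right_injective _ hdet hGM) j) k
  simpa [M, G, Matrix.mul_apply, Matrix.one_apply, mul_comm] using this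

theorem coeff_X_mul_pderiv_self {σ : Type*} (v : σ) (p : MvPolynomial σ F) (β : σ →₀ ℕ) :
    coeff β (X v * pderiv v p) = β v * coeff β p := by
  classical
  rw [coeff_X_mul']
  split_ifs with h
  · have hv : β v ≠ 0 := Finsupp.mem_support_iff.1 h
    rw [coeff_pderiv, Finsupp.sub_add_single_one_cancel hv, mul_comm]
    congr 1
    simp only [Finsupp.tsub_apply, Finsupp.single_eq_same]
    rw [← Nat.cast_add_one, Nat.sub_add_cancel (Nat.one_le_iff_ne_zero.2 hv)]
  · simp [Finsupp.notMem_support_iff.1 h]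

end Polarization

/-- On `F[X]`, the derivation `D` is the sum of the row polarizations weighted by the `Y i l`, up
to an element of `F[X]`. -/
theorem exists_derivation_rename_eq {F : Type*} [Field F] {d : F → F} {n : ℕ}
    {D : Rgen F n → Rgen F n}
    (hD_add : ∀ a b, D (a + b) = D a + D b)
    (hD_mul : ∀ a b, D (a * b) = D a * b + a * D b)
    (hD_C : ∀ f : F, D (C f) = C (d f))
    (hD_X : ∀ i j : Fin n,
      D (X (Sum.inr (i, j))) = ∑ l : Fin n, X (Sum.inl (i, l, 0)) * X (Sum.inr (l, j)))
    (p : MvPolynomial (Fin n × Fin n) F) :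
    ∃ r : MvPolynomial (Fin n × Fin n) F, D (rename Sum.inr p) = rename Sum.inr r +
      ∑ i, ∑ l, X (Sum.inl (i, l, 0)) * rename Sum.inr (rowPolarization i l p) := by
  induction p using MvPolynomial.induction_on with
  | C a => exact ⟨C (d a), by simp [hD_C]⟩
  | add p q hp hq =>
    obtain ⟨r, hr⟩ := hp
    obtain ⟨s, hs⟩ := hq
    refine ⟨r + s, ?_⟩
    simp only [map_add, hD_add, hr, hs, mul_add, Finset.sum_add_distrib]
    ring
  | mul_X p v hp =>
    obtain ⟨r, hr⟩ := hp
    obtain ⟨a, b⟩ := v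
    refine ⟨r * X (a, b), ?_⟩
    have hX : D (X (Sum.inr (a, b))) = ∑ i, ∑ l, X (Sum.inl (i, l, 0)) *
        rename Sum.inr (rowPolarization i l (X (a, b) : MvPolynomial (Fin n × Fin n) F)) := by
      rw [Fintype.sum_eq_single a fun i hi => by simp [rowPolarization_X, hi.symm], hD_X]
      simp [rowPolarization_X]
    simp only [map_mul, rename_X, hD_mul, hr, hX, Derivation.leibniz, smul_eq_mul, map_add,
      mul_add, Finset.sum_add_distrib, add_mul, Finset.sum_mul, Finset.mul_sum]
    rw [add_assoc, add_comm (∑ i, ∑ l, _ * _ * _)]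
    simp only [mul_comm, mul_left_comm]

/-- A Darboux polynomial of `D` in `F[X]` with cofactor in `F{Y}` is an eigenvector of every row
polarization. -/
theorem exists_rowPolarization_eq_smul {F : Type*} [Field F] {d : F → F} {n : ℕ}
    {D : Rgen F n → Rgen F n}
    (hD_add : ∀ a b, D (a + b) = D a + D b)
    (hD_mul : ∀ a b, D (a * b) = D a * b + a * D b)
    (hD_C : ∀ f : F, D (C f) = C (d f))
    (hD_X : ∀ i j : Fin n,
      D (X (Sum.inr (i, j))) = ∑ l : Fin n, X (Sum.inl (i, l, 0)) * X (Sum.inr (l, j)))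
    {p : MvPolynomial (Fin n × Fin n) F} {q : Rgen F n} (hq : q ∈ FY F n)
    (hDp : D (rename Sum.inr p) = q * rename Sum.inr p) (i l : Fin n) :
    ∃ a : F, rowPolarization i l p = a • p := by
  obtain ⟨r, hr⟩ := exists_derivation_rename_eq hD_add hD_mul hD_C hD_X p
  let φ (y : Fin n × Fin n × ℕ → F) : Rgen F n →ₐ[F] MvPolynomial (Fin n × Fin n) F :=
    aeval (Sum.elim (fun v => C (y v)) X)
  have hφX (y) (s : MvPolynomial (Fin n × Fin n) F) : φ y (rename Sum.inr s) = s := by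
    simp only [φ, aeval_rename, Sum.elim_comp_inr, aeval_X_left_apply]
  have hφq (y) : ∃ a : F, φ y q = C a := by
    have hle : FY F n ≤ (⊥ : Subalgebra F (MvPolynomial (Fin n × Fin n) F)).comap (φ y) := by
      refine Algebra.adjoin_le ?_
      rintro _ ⟨v, rfl⟩
      exact ⟨y v, by simp [φ, algebraMap_eq]⟩
    obtain ⟨a, ha⟩ := hle hq
    exact ⟨a, ha.symm⟩
  have key (y : Fin n × Fin n × ℕ → F) : ∃ a : F, r + ∑ i, ∑ l, C (y (i, l, 0)) * rowPolarization i l p = a • p := by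
    obtain ⟨a, ha⟩ := hφq y
    refine ⟨a, ?_⟩
    have := congrArg (φ y) (hr.symm.trans hDp)
    simp only [map_add, map_sum, map_mul, hφX, ha] at this
    simpa [φ, smul_eq_C_mul] using this
  obtain ⟨a, ha⟩ := key 0
  obtain ⟨b, hb⟩ := key (Pi.single (i, l, 0) 1)
  refine ⟨b - a, ?_⟩
  have hr0 : r = a • p := by simpa using ha
  have hsum : ∑ i', ∑ l', C ((Pi.single (i, l, 0) 1 : Fin n × Fin n × ℕ → F) (i', l', 0)) *
      rowPolarization i' l' p = rowPolarization i l p := by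
    rw [Finset.sum_eq_single i (fun i' _ hi => by simp [hi]) (by simp),
      Finset.sum_eq_single l (fun l' _ hl => by simp [hl]) (by simp)]
    simp
  rw [hsum, hr0] at hb
  rw [sub_smul, ← hb, add_sub_cancel_left]

/-- If the rows below `a` of the leading exponent `α` vanish in column `b`, then row `a` of `α`
vanishes to the right of `b`, provided that `p` is killed by the column polarizations. -/
theorem leadingExponent_eq_zero_of_col {F : Type*} [Field F] [CharZero F] {n : ℕ}
    {p : MvPolynomial (Fin n × Fin n) F} {α : (Fin n × Fin n) →₀ ℕ} (hmem : α ∈ p.support)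
    (hlead : ∀ β ∈ p.support, β ≠ α → degRevLexLT β α) {a b b' : Fin n} (hb : b < b')
    (hcol : ∑ i, X (i, b) * pderiv (i, b') p = 0) (hbelow : ∀ i, a < i → α (i, b) = 0) :
    α (a, b') = 0 := by
  by_contra hne
  have hα : coeff α p ≠ 0 := mem_support_iff.1 hmem
  set δ := α - Finsupp.single (a, b') 1 with hδ
  have hδα : δ + Finsupp.single (a, b') 1 = α := Finsupp.sub_add_single_one_cancel hne
  have hαv (v) : α v = δ v + Finsupp.single (a, b') 1 v := by rw [← hδα, Finsupp.add_apply]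
  have hcoeff := congrArg (coeff (δ + Finsupp.single (a, b) 1)) hcol
  rw [coeff_sum, Finset.sum_eq_single a ?_ (by simp), coeff_X_mul', if_pos (by simp),
    add_tsub_cancel_right, coeff_pderiv, hδα, coeff_zero, mul_eq_zero] at hcoeff
  · exact hcoeff.elim hα (Nat.cast_add_one_ne_zero _)
  intro i _ hia
  rw [coeff_X_mul']
  split_ifs with hi
  swap
  · rfl
  have hib : δ (i, b) ≠ 0 := by
    simpa [Finsupp.single_apply, hia.symm] using hi
  have hlt : i < a := by
    refine lt_of_le_of_ne (not_lt.1 fun h => hib ?_) hia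
    have := hbelow i h
    rw [hαv] at this
    omega
  rw [coeff_pderiv]
  set β := δ + Finsupp.single (a, b) 1 - Finsupp.single (i, b) 1 + Finsupp.single (i, b') 1 with hβ
  suffices hβp : β ∉ p.support by rw [notMem_support_iff.1 hβp, zero_mul]
  intro hβp
  have hβv (v) : β v + Finsupp.single (i, b) 1 v =
      δ v + Finsupp.single (a, b) 1 v + Finsupp.single (i, b') 1 v := by
    have hle : Finsupp.single (i, b) 1 ≤ δ + Finsupp.single (a, b) 1 :=
      le_add_right (Finsupp.single_le_iff.2 (Nat.one_le_iff_ne_zero.2 hib))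
    rw [← Finsupp.add_apply, hβ, add_right_comm, tsub_add_cancel_of_le hle]
    rfl
  have hβa : β (a, b') < α (a, b') := by
    have h₁ := hβv (a, b')
    have h₂ := hαv (a, b')
    simp [hia, hb.ne] at h₁ h₂
    omega
  rcases hlead β hβp fun h => hβa.ne (by rw [h]) with hdeg | ⟨-, v, hv, hw⟩
  · have h₁ := Fintype.sum_congr _ _ hβv
    have h₂ : ∑ v, α v = ∑ v, (δ v + Finsupp.single (a, b') 1 v) := Fintype.sum_congr _ _ hαv
    simp only [Finset.sum_add_distrib, Finsupp.single_apply, Finset.sum_ite_eq,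
      Finset.mem_univ, if_true] at h₁ h₂
    omega
  · obtain ⟨r, s⟩ := v
    have h₁ := hβv (r, s)
    have h₂ := hαv (r, s)
    have h₃ := hw (a, b')
    simp only [Finsupp.single_apply, Prod.mk.injEq] at h₁ h₂ h₃
    grind

/-- The leading exponent vector (degrevlex) of a nonzero Darboux
polynomial `p ∈ F[X]` is supported on the antidiagonal: `α i j = 0` for `j ≠ n+1-i`
(here `n+1-i` in 1-based indexing is `i.rev` in 0-based indexing), and if `α ≠ 0` then
`α (i, i.rev) > 0` for every `i`. -/
theorem stmt_11
    {F : Type*} [Field F] [CharZero F] (d : F → F)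
    (hd_add : ∀ a b : F, d (a + b) = d a + d b)
    (hd_mul : ∀ a b : F, d (a * b) = d a * b + a * d b)
    (n : ℕ) (hn : 1 ≤ n)
    (D : Rgen F n → Rgen F n)
    (hD_add : ∀ a b, D (a + b) = D a + D b)
    (hD_mul : ∀ a b, D (a * b) = D a * b + a * D b)
    (hD_C : ∀ f : F, D (C f) = C (d f))
    (hD_Y : ∀ (i j : Fin n) (k : ℕ),
      D (X (Sum.inl (i, j, k))) = X (Sum.inl (i, j, k + 1)))
    (hD_X : ∀ i j : Fin n,
      D (X (Sum.inr (i, j))) = ∑ l : Fin n, X (Sum.inl (i, l, 0)) * X (Sum.inr (l, j)))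
    (p0 : MvPolynomial (Fin n × Fin n) F) (hp0 : p0 ≠ 0)
    (q : Rgen F n) (hq : q ∈ FY F n)
    (hDp : D (rename Sum.inr p0) = q * rename Sum.inr p0)
    (α : (Fin n × Fin n) →₀ ℕ) (hmem : α ∈ p0.support)
    (hlead : ∀ β ∈ p0.support, β ≠ α → degRevLexLT β α)
    :
    (∀ i j : Fin n, j ≠ i.rev → α (i, j) = 0) ∧
    (α ≠ 0 → ∀ i : Fin n, 0 < α (i, i.rev)) := by
  obtain ⟨c, hrow⟩ := exists_rowPolarization_eq
    (exists_rowPolarization_eq_smul hD_add hD_mul hD_C hD_X hq hDp)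
  have hcol := sum_X_mul_pderiv_col hrow
  have hα : coeff α p0 ≠ 0 := mem_support_iff.1 hmem
  have hrowsum (i : Fin n) : ((∑ j, α (i, j) : ℕ) : F) = c := by
    have h := congrArg (coeff α) (hrow i i)
    simp only [rowPolarization_apply, coeff_sum, coeff_X_mul_pderiv_self, if_true, coeff_smul,
      ← Finset.sum_mul, smul_eq_mul] at h
    exact_mod_cast mul_right_cancel₀ hα h
  have hcolsum (j : Fin n) : ((∑ i, α (i, j) : ℕ) : F) = c := by
    have h := congrArg (coeff α) (hcol j j)
    simp only [coeff_sum, coeff_X_mul_pderiv_self, if_true, coeff_smul,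
      ← Finset.sum_mul, smul_eq_mul] at h
    exact_mod_cast mul_right_cancel₀ hα h
  have hanti_of_row (i : Fin n) (h : ∀ j, j ≠ i.rev → α (i, j) = 0) :
      (α (i, i.rev) : F) = c := by
    rw [← hrowsum i, Finset.sum_eq_single i.rev (fun j _ hj => h j hj) (by simp)]
  have hzero : ∀ i j : Fin n, j ≠ i.rev → α (i, j) = 0 := by
    intro a
    induction a using WellFoundedGT.induction with
    | ind a ih =>
    intro j hj
    rcases lt_or_gt_of_ne hj with hlt | hgt
    · have hlt' : a < j.rev := Fin.lt_rev_iff.2 hlt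
      have hjm : (α (j.rev, j) : F) = c := by
        simpa using hanti_of_row j.rev (ih _ hlt')
      have heq : α (j.rev, j) = ∑ i, α (i, j) := by
        exact_mod_cast hjm.trans (hcolsum j).symm
      have hle := Finset.add_le_sum (f := fun i => α (i, j)) (fun _ _ => Nat.zero_le _)
        (Finset.mem_univ a) (Finset.mem_univ j.rev) hlt'.ne
      omega
    · refine leadingExponent_eq_zero_of_col hmem hlead hgt ?_ fun i hi => ih i hi _ ?_
      · rw [hcol, if_neg hgt.ne']
      · exact fun h => hi.ne (Fin.rev_injective h)
  refine ⟨hzero, fun hne i => Nat.pos_of_ne_zero fun hi => hne ?_⟩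
  have hc : c = 0 := by rw [← hanti_of_row i (hzero i), hi, Nat.cast_zero]
  ext ⟨a, b⟩
  by_cases hb : b = a.rev
  · have := hanti_of_row a (hzero a)
    rw [hc] at this
    simpa [hb] using this
  · exact hzero a b hb
end

section
/- The only Darboux polynomials in R are the scalar multiples of powers of det[X]: if p, q ∈ R satisfy p ≠ 0 and D(p) = q·p, then there exist a ∈ ℕ and a nonzero ℓ ∈ F such that p = C(ℓ)·det[X]^a and q = C(d(ℓ)/ℓ) + a·Σ_{i=1}^n Y_{ii}. -/
open MvPolynomial

section Derivations

variable {σ F : Type*} [Field F]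

/-- A derivation of a polynomial ring that is not assumed linear over the coefficients is
determined by its values on constants and variables. -/
theorem MvPolynomial.int_derivation_ext
    {D₁ D₂ : Derivation ℤ (MvPolynomial σ F) (MvPolynomial σ F)}
    (hC : ∀ f, D₁ (C f) = D₂ (C f)) (hX : ∀ v, D₁ (X v) = D₂ (X v)) : D₁ = D₂ := by
  ext1 p
  induction p using MvPolynomial.induction_on with
  | C f => exact hC f
  | add p q hp hq => rw [map_add, map_add, hp, hq]
  | mul_X p v hp => rw [Derivation.leibniz, Derivation.leibniz, hp, hX]

theorem MvPolynomial.coeff_X_mul_pderiv (v : σ) (p : MvPolynomial σ F) (m : σ →₀ ℕ) :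
    coeff m (X v * pderiv v p) = m v * coeff m p := by
  classical
  rw [coeff_X_mul', coeff_pderiv]
  split_ifs with h
  · have hv : 1 ≤ m v := Nat.one_le_iff_ne_zero.mpr (Finsupp.mem_support_iff.mp h)
    have hm : m - Finsupp.single v 1 + Finsupp.single v 1 = m :=
      tsub_add_cancel_of_le (Finsupp.single_le_iff.mpr hv)
    have hc : ((m - Finsupp.single v 1 : σ →₀ ℕ) v : F) + 1 = m v := by
      rw [← Nat.cast_add_one]
      congr 1
      simp only [Finsupp.tsub_apply, Finsupp.single_eq_same]
      omega
    rw [hm, hc, mul_comm]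
  · simp [Finsupp.notMem_support_iff.mp h]

theorem MvPolynomial.totalDegree_X_mul_pderiv_le (w v : σ) (p : MvPolynomial σ F) :
    (X w * pderiv v p).totalDegree ≤ p.totalDegree := by
  classical
  refine Finset.sup_le fun m hm => ?_
  rw [mem_support_iff, coeff_X_mul', coeff_pderiv] at hm
  split_ifs at hm with hw
  · have hle : Finsupp.single w 1 ≤ m := Finsupp.single_le_iff.mpr
      (Nat.one_le_iff_ne_zero.mpr (Finsupp.mem_support_iff.mp hw))
    have h := le_totalDegree (mem_support_iff.mpr (left_ne_zero_of_mul hm))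
    have hdeg := congrArg Finsupp.degree (tsub_add_cancel_of_le hle)
    simp only [map_add, Finsupp.degree_single] at hdeg
    change Finsupp.degree _ ≤ _ at h
    change Finsupp.degree _ ≤ _
    simp only [map_add, Finsupp.degree_single] at h
    omega
  · exact absurd rfl hm

theorem MvPolynomial.pderiv_eq_zero_of_eq_mul {v : σ} {p c : MvPolynomial σ F}
    (h : pderiv v p = c * p) : pderiv v p = 0 := by
  by_contra h0
  have hc : c ≠ 0 := by rintro rfl; simp [h] at h0
  have hp : p ≠ 0 := by rintro rfl; simp at h0
  have hle := totalDegree_X_mul_pderiv_le v v p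
  rw [totalDegree_mul_of_isDomain (X_ne_zero v) h0, h, totalDegree_mul_of_isDomain hc hp,
    totalDegree_X] at hle
  omega

open scoped MonomialOrder in
/-- Two polynomials over a field of characteristic zero with the same logarithmic partial
derivatives are proportional. -/
theorem MvPolynomial.exists_eq_C_mul_of_pderiv_mul_eq [CharZero F] {p r : MvPolynomial σ F}
    (hr : r ≠ 0) (h : ∀ v, pderiv v p * r = p * pderiv v r) : ∃ l : F, p = C l * r := by
  obtain ⟨_, _⟩ := exists_wellFoundedGT σ
  let o : MonomialOrder σ := MonomialOrder.lex
  have hle (v : σ) (s : MvPolynomial σ F) : o.degree (X v * pderiv v s) ≼[o] o.degree s :=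
    o.degree_le_iff.mpr fun m hm => o.le_degree (mem_support_iff.mpr fun h0 => by
      rw [mem_support_iff, coeff_X_mul_pderiv, h0, mul_zero] at hm
      exact hm rfl)
  have key (s : MvPolynomial σ F) (hs : s ≠ 0) (h : ∀ v, pderiv v s * r = s * pderiv v r) :
      o.degree s = o.degree r := by
    ext v
    have h1 : X v * pderiv v s * r = s * (X v * pderiv v r) := by linear_combination X v * h v
    have h2 := congrArg (coeff (o.degree s + o.degree r)) h1
    rw [o.coeff_mul_of_add_of_degree_le (hle v s) le_rfl,
      o.coeff_mul_of_add_of_degree_le le_rfl (hle v r), coeff_X_mul_pderiv,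
      coeff_X_mul_pderiv] at h2
    have hs' : coeff (o.degree s) s ≠ 0 := o.coeff_degree_ne_zero_iff.mpr hs
    have hr' : coeff (o.degree r) r ≠ 0 := o.coeff_degree_ne_zero_iff.mpr hr
    have h3 : ((o.degree s v : F) - o.degree r v) *
        (coeff (o.degree s) s * coeff (o.degree r) r) = 0 := by linear_combination h2
    exact_mod_cast sub_eq_zero.mp
      ((mul_eq_zero.mp h3).resolve_right (mul_ne_zero hs' hr'))
  have hr' : coeff (o.degree r) r ≠ 0 := o.coeff_degree_ne_zero_iff.mpr hr
  refine ⟨coeff (o.degree r) p / coeff (o.degree r) r, ?_⟩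
  rw [← sub_eq_zero]
  by_contra hs
  have hd := key _ hs fun v => by
    rw [map_sub, pderiv_C_mul]
    linear_combination h v
  apply o.coeff_degree_ne_zero_iff.mpr hs
  rw [hd, coeff_sub, coeff_C_mul, div_mul_cancel₀ _ hr', sub_self]

end Derivations

theorem Derivation.leibniz_finset_prod {R A ι : Type*} [CommRing R] [CommRing A] [Algebra R A]
    [DecidableEq ι] (δ : Derivation R A A) (s : Finset ι) (f : ι → A) :
    δ (∏ i ∈ s, f i) = ∑ i ∈ s, ∏ j ∈ s, Function.update f i (δ (f i)) j := by
  induction s using Finset.induction_on with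
  | empty => simp
  | insert a s ha ih =>
    rw [Finset.prod_insert ha, Derivation.leibniz, ih, Finset.sum_insert ha,
      Finset.prod_insert ha, Function.update_self, smul_eq_mul, smul_eq_mul, Finset.mul_sum,
      add_comm, mul_comm]
    congr 1
    · congr 1
      exact Finset.prod_congr rfl fun j hj =>
        (Function.update_of_ne (ne_of_mem_of_not_mem hj ha) _ _).symm
    · refine Finset.sum_congr rfl fun i hi => ?_
      rw [Finset.prod_insert ha, Function.update_of_ne (ne_of_mem_of_not_mem hi ha).symm]

theorem Derivation.map_det {R A ι : Type*} [CommRing R] [CommRing A] [Algebra R A]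
    [Fintype ι] [DecidableEq ι] (δ : Derivation R A A) (M : Matrix ι ι A) :
    δ M.det = ∑ i, (M.updateRow i fun j => δ (M i j)).det := by
  simp only [← Matrix.det_transpose M, ← Matrix.det_transpose (Matrix.updateRow _ _ _)]
  simp only [Matrix.det_apply, map_sum, Matrix.transpose_apply]
  rw [Finset.sum_comm]
  refine Finset.sum_congr rfl fun τ _ => ?_
  rw [Units.smul_def, map_zsmul, Derivation.leibniz_finset_prod, Finset.smul_sum]
  refine Finset.sum_congr rfl fun i _ => ?_
  rw [Units.smul_def]
  congr 1
  refine Finset.prod_congr rfl fun j _ => ?_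
  by_cases h : j = i
  · subst h; simp
  · simp [h]

/-- Liouville's formula: if `δ M = A * M` entrywise, then `δ (det M) = tr A * det M`. -/
theorem Derivation.map_det_of_map_eq_mul {R A ι : Type*} [CommRing R] [CommRing A]
    [Algebra R A] [Fintype ι] [DecidableEq ι] (δ : Derivation R A A) (M B : Matrix ι ι A)
    (h : ∀ i j, δ (M i j) = ∑ k, B i k * M k j) : δ M.det = B.trace * M.det := by
  rw [δ.map_det, Matrix.trace, Finset.sum_mul]
  refine Finset.sum_congr rfl fun i _ => ?_
  have hrow : (fun j => δ (M i j)) = ∑ k, B i k • M k := by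
    ext j
    simp [h, Finset.sum_apply]
  rw [hrow, Matrix.det_updateRow_sum, smul_eq_mul, Matrix.diag_apply]

section RowOperators

variable {F : Type*} [Field F] {n : ℕ}

/-- The derivation replacing row `i` of the matrix `X` by row `j`. -/
noncomputable def rowOp (F : Type*) [Field F] {n : ℕ} (i j : Fin n) :
    Derivation F (Rgen F n) (Rgen F n) :=
  ∑ m, (X (Sum.inr (j, m)) : Rgen F n) • pderiv (Sum.inr (i, m))

theorem rowOp_apply (i j : Fin n) (p : Rgen F n) :
    rowOp F i j p = ∑ m, X (Sum.inr (j, m)) * pderiv (Sum.inr (i, m)) p := by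
  have h := congrFun (map_sum Derivation.coeFnAddMonoidHom
    (fun m => (X (Sum.inr (j, m)) : Rgen F n) •
      (pderiv (Sum.inr (i, m)) : Derivation F (Rgen F n) (Rgen F n))) Finset.univ) p
  rw [Finset.sum_apply] at h
  exact h

theorem rowOp_X_inl (i j : Fin n) (v : Fin n × Fin n × ℕ) :
    rowOp F i j (X (Sum.inl v)) = 0 := by
  simp [rowOp_apply, pderiv_X]

theorem rowOp_X_inr (i j a b : Fin n) :
    rowOp F i j (X (Sum.inr (a, b))) = if a = i then X (Sum.inr (j, b)) else 0 := by
  rw [rowOp_apply, Finset.sum_eq_single b]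
  · by_cases h : a = i <;> simp [pderiv_X, h]
  · intro m _ hm
    rw [pderiv_X_of_ne (by simp [hm.symm]), mul_zero]
  · simp

theorem rowOp_commutator (i j k l : Fin n) :
    ⁅rowOp F i j, rowOp F k l⁆ =
      (if l = i then rowOp F k j else 0) - (if j = k then rowOp F i l else 0) := by
  refine MvPolynomial.derivation_ext fun v => ?_
  rw [Derivation.commutator_apply]
  rcases v with v | ⟨a, b⟩
  · simp only [rowOp_X_inl, map_zero, Derivation.sub_apply]
    split_ifs <;> simp [rowOp_X_inl]
  · simp only [rowOp_X_inr, Derivation.sub_apply]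
    split_ifs <;> simp_all [rowOp_X_inr]

theorem totalDegree_rowOp_le (i j : Fin n) (p : Rgen F n) :
    (rowOp F i j p).totalDegree ≤ p.totalDegree := by
  rw [rowOp_apply]
  exact totalDegree_finsetSum_le fun m _ => totalDegree_X_mul_pderiv_le _ _ _

theorem exists_rowOp_eq_C_mul {i j : Fin n} {p c : Rgen F n} (h : rowOp F i j p = c * p) :
    ∃ g : F, rowOp F i j p = C g * p := by
  by_cases h0 : c * p = 0
  · exact ⟨0, by simp [h, h0]⟩
  have hle := totalDegree_rowOp_le i j p
  rw [h, totalDegree_mul_of_isDomain (left_ne_zero_of_mul h0) (right_ne_zero_of_mul h0)] at hle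
  exact ⟨coeff 0 c, by rw [h, ← totalDegree_eq_zero_iff_eq_C.mp (by omega)]⟩

/-- A common eigenvector of all row operators has a natural number as weight: off-diagonal
operators kill it and the diagonal ones act by this number. -/
theorem exists_nat_rowOp_eq [CharZero F] {p : Rgen F n} (hn : 1 ≤ n) (hp : p ≠ 0)
    (h : ∀ i j, ∃ c, rowOp F i j p = c * p) :
    ∃ a : ℕ, ∀ i j, rowOp F i j p = if i = j then (a : Rgen F n) * p else 0 := by
  choose c hc using h
  choose g hg using fun i j => exists_rowOp_eq_C_mul (hc i j)
  have hcomm (i j k l : Fin n) : ⁅rowOp F i j, rowOp F k l⁆ p = 0 := by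
    rw [Derivation.commutator_apply, hg k l, hg i j, ← smul_eq_C_mul, ← smul_eq_C_mul,
      Derivation.map_smul, Derivation.map_smul, hg k l, hg i j, smul_eq_C_mul, smul_eq_C_mul]
    ring
  have hoff (i j : Fin n) (hij : i ≠ j) : rowOp F i j p = 0 := by
    have h := hcomm i i i j
    rw [rowOp_commutator] at h
    simpa [hij.symm] using h
  have hdiag (i j : Fin n) : rowOp F i i p = rowOp F j j p := by
    by_cases hij : i = j
    · rw [hij]
    have h := hcomm i j j i
    rw [rowOp_commutator] at h
    simp only [if_true, Derivation.sub_apply] at h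
    exact (sub_eq_zero.mp h).symm
  obtain ⟨m, hm⟩ := ne_zero_iff.mp hp
  let i₀ : Fin n := ⟨0, hn⟩
  refine ⟨∑ b, m (Sum.inr (i₀, b)), fun i j => ?_⟩
  split_ifs with hij
  · subst hij
    have h1 := congrArg (coeff m) (hg i₀ i₀)
    rw [rowOp_apply, coeff_sum, coeff_C_mul] at h1
    simp only [coeff_X_mul_pderiv] at h1
    rw [← Finset.sum_mul] at h1
    rw [hdiag i i₀, hg, ← mul_right_cancel₀ hm h1]
    simp
  · exact hoff i j hij

theorem detX_ne_zero : detX F n ≠ 0 := by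
  intro h
  have h1 := congrArg (aeval (Sum.elim (fun _ => 0)
    (fun v : Fin n × Fin n => (1 : Matrix (Fin n) (Fin n) F) v.1 v.2))) h
  rw [detX, AlgHom.map_det] at h1
  have h2 : (aeval (R := F) (Sum.elim (fun _ : Fin n × Fin n × ℕ => 0)
      (fun v : Fin n × Fin n => (1 : Matrix (Fin n) (Fin n) F) v.1 v.2))).mapMatrix
      (Matrix.of fun i j : Fin n => (X (Sum.inr (i, j)) : Rgen F n)) = 1 := by
    ext i j
    simp
  rw [h2, Matrix.det_one, map_zero] at h1
  exact one_ne_zero h1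

theorem rowOp_detX (i j : Fin n) : rowOp F i j (detX F n) = if i = j then detX F n else 0 := by
  rw [detX, Derivation.map_det_of_map_eq_mul _ _ (Matrix.single i j 1)]
  · split_ifs with h
    · subst h; simp
    · rw [Matrix.trace_single_eq_of_ne _ _ _ h, zero_mul]
  · intro a b
    by_cases h : i = a
    · subst h
      simp [rowOp_X_inr, Matrix.single_apply]
    · simp [rowOp_X_inr, h, Ne.symm h]

theorem pderiv_inl_detX (v : Fin n × Fin n × ℕ) : pderiv (Sum.inl v) (detX F n) = 0 := by
  rw [detX, Derivation.map_det_of_map_eq_mul _ _ 0 fun i j => by simp [pderiv_X]]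
  simp

/-- Row operators recover the partial derivatives up to the factor `det[X]`. -/
theorem detX_mul_pderiv_inr {p c : Rgen F n}
    (h : ∀ i j, rowOp F i j p = if i = j then c * p else 0) (i m : Fin n) :
    detX F n * pderiv (Sum.inr (i, m)) p =
      c * p * (Matrix.of fun i j : Fin n => (X (Sum.inr (i, j)) : Rgen F n)).adjugate m i := by
  set M : Matrix (Fin n) (Fin n) (Rgen F n) := Matrix.of fun i j => X (Sum.inr (i, j)) with hM
  have h1 : M.mulVec (fun m => pderiv (Sum.inr (i, m)) p) = Pi.single i (c * p) := by
    ext1 j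
    rw [Pi.single_apply]
    simp only [eq_comm (a := j), ← h, rowOp_apply]
    rfl
  have h2 := congrArg (fun v => M.adjugate.mulVec v m) h1
  simp only [Matrix.mulVec_mulVec, Matrix.adjugate_mul, Matrix.smul_mulVec, Matrix.one_mulVec,
    Pi.smul_apply, smul_eq_mul, Matrix.mulVec_single] at h2
  rw [detX, h2]
  simp [mul_comm]

/-- A polynomial in `X` alone that has the weight of `det[X] ^ a` is a multiple of it. -/
theorem exists_eq_C_mul_detX_pow [CharZero F] {p : Rgen F n} {a : ℕ}
    (hY : ∀ v, pderiv (Sum.inl v) p = 0)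
    (hX : ∀ i j, rowOp F i j p = if i = j then (a : Rgen F n) * p else 0) :
    ∃ l : F, p = C l * detX F n ^ a := by
  refine exists_eq_C_mul_of_pderiv_mul_eq (pow_ne_zero _ detX_ne_zero) fun v => ?_
  rcases v with v | ⟨i, m⟩
  · simp [hY, pderiv_inl_detX]
  have hdet (i j : Fin n) : rowOp F i j (detX F n ^ a) =
      if i = j then (a : Rgen F n) * detX F n ^ a else 0 := by
    rw [Derivation.leibniz_pow, rowOp_detX]
    split_ifs
    · rcases a with _ | a
      · simp
      · simp [pow_succ]
    · simp
  refine mul_left_cancel₀ (detX_ne_zero (F := F) (n := n)) ?_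
  linear_combination detX F n ^ a * detX_mul_pderiv_inr hX i m - p * detX_mul_pderiv_inr hdet i m

end RowOperators

section Darboux

variable {F : Type*} [Field F] {n : ℕ} (δ : Derivation ℤ (Rgen F n) (Rgen F n)) {d : F → F}

theorem pderiv_inl_succ_comm (hC : ∀ f : F, δ (C f) = C (d f))
    (hY : ∀ (i j : Fin n) (k : ℕ), δ (X (Sum.inl (i, j, k))) = X (Sum.inl (i, j, k + 1)))
    (hX : ∀ i j : Fin n,
      δ (X (Sum.inr (i, j))) = ∑ l : Fin n, X (Sum.inl (i, l, 0)) * X (Sum.inr (l, j)))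
    (i j : Fin n) (k : ℕ) (p : Rgen F n) :
    pderiv (Sum.inl (i, j, k + 1)) (δ p) =
      δ (pderiv (Sum.inl (i, j, k + 1)) p) + pderiv (Sum.inl (i, j, k)) p := by
  have h : ⁅(pderiv (Sum.inl (i, j, k + 1)) : Derivation F (Rgen F n) (Rgen F n)).restrictScalars ℤ,
      δ⁆ =
      (pderiv (Sum.inl (i, j, k)) : Derivation F (Rgen F n) (Rgen F n)).restrictScalars ℤ := by
    refine int_derivation_ext (fun f => ?_) fun v => ?_
    · simp [Derivation.commutator_apply, hC]
    · rw [Derivation.commutator_apply]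
      rcases v with ⟨a, b, c⟩ | ⟨a, b⟩
      · simp [hY, pderiv_X, Pi.single_apply, apply_ite δ]
      · simp [hX, pderiv_X, Derivation.leibniz]
  have h' := DFunLike.congr_fun h p
  rw [Derivation.commutator_apply, sub_eq_iff_eq_add'] at h'
  exact h'

theorem pderiv_inl_zero_comm (hC : ∀ f : F, δ (C f) = C (d f))
    (hY : ∀ (i j : Fin n) (k : ℕ), δ (X (Sum.inl (i, j, k))) = X (Sum.inl (i, j, k + 1)))
    (hX : ∀ i j : Fin n,
      δ (X (Sum.inr (i, j))) = ∑ l : Fin n, X (Sum.inl (i, l, 0)) * X (Sum.inr (l, j)))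
    (i j : Fin n) (p : Rgen F n) :
    pderiv (Sum.inl (i, j, 0)) (δ p) = δ (pderiv (Sum.inl (i, j, 0)) p) + rowOp F i j p := by
  have h : ⁅(pderiv (Sum.inl (i, j, 0)) : Derivation F (Rgen F n) (Rgen F n)).restrictScalars ℤ, δ⁆ =
      (rowOp F i j).restrictScalars ℤ := by
    refine int_derivation_ext (fun f => ?_) fun v => ?_
    · simp [Derivation.commutator_apply, hC]
    · rw [Derivation.commutator_apply]
      rcases v with ⟨a, b, c⟩ | ⟨a, b⟩
      · simp [hY, pderiv_X, Pi.single_apply, apply_ite δ, rowOp_X_inl]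
      · by_cases h : a = i <;>
          simp [hX, pderiv_X, Derivation.leibniz, rowOp_X_inr, Pi.single_apply, h]
  have h' := DFunLike.congr_fun h p
  rw [Derivation.commutator_apply, sub_eq_iff_eq_add'] at h'
  exact h'

theorem pderiv_inl_eq_zero_of_darboux (hC : ∀ f : F, δ (C f) = C (d f))
    (hY : ∀ (i j : Fin n) (k : ℕ), δ (X (Sum.inl (i, j, k))) = X (Sum.inl (i, j, k + 1)))
    (hX : ∀ i j : Fin n,
      δ (X (Sum.inr (i, j))) = ∑ l : Fin n, X (Sum.inl (i, l, 0)) * X (Sum.inr (l, j)))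
    {p q : Rgen F n} (h : δ p = q * p) (i j : Fin n) (k : ℕ) :
    pderiv (Sum.inl (i, j, k)) p = 0 := by
  have step (k : ℕ) (hk : pderiv (Sum.inl (i, j, k + 1)) p = 0) :
      pderiv (Sum.inl (i, j, k)) p = 0 := by
    have h1 := pderiv_inl_succ_comm δ hC hY hX i j k p
    rw [h, pderiv_mul, hk, map_zero, mul_zero, add_zero, zero_add] at h1
    exact pderiv_eq_zero_of_eq_mul h1.symm
  have hinj : Function.Injective fun k : ℕ =>
      (Sum.inl (i, j, k) : (Fin n × Fin n × ℕ) ⊕ (Fin n × Fin n)) := fun a b hab => by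
    simpa using hab
  have hfin := (p.vars.finite_toSet.preimage hinj.injOn)
  obtain ⟨N, hN⟩ := hfin.bddAbove
  have hlarge (k : ℕ) (hk : N < k) : pderiv (Sum.inl (i, j, k)) p = 0 :=
    pderiv_eq_zero_of_notMem_vars fun hmem => absurd (hN hmem) (not_le.mpr hk)
  have hdown (t k : ℕ) (hk : N < k + t) : pderiv (Sum.inl (i, j, k)) p = 0 := by
    induction t generalizing k with
    | zero => exact hlarge k hk
    | succ t ih => exact step k (ih (k + 1) (by omega))
  exact hdown (N + 1) k (by omega)

end Darboux

/-- The only Darboux polynomials in `R = F{Y}[X]` are the `F`-scalar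
multiples of powers of `det[X]`: if `p ≠ 0` and `D p = q * p` then `p = C ℓ * det[X]^a`
and `q = C (d ℓ / ℓ) + a • ∑ i, Y i i` for some `a ∈ ℕ` and nonzero `ℓ ∈ F`. -/
theorem stmt_13
    {F : Type*} [Field F] [CharZero F] (d : F → F)
    (hd_add : ∀ a b : F, d (a + b) = d a + d b)
    (hd_mul : ∀ a b : F, d (a * b) = d a * b + a * d b)
    (n : ℕ) (hn : 1 ≤ n)
    (D : Rgen F n → Rgen F n)
    (hD_add : ∀ a b, D (a + b) = D a + D b)
    (hD_mul : ∀ a b, D (a * b) = D a * b + a * D b)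
    (hD_C : ∀ f : F, D (C f) = C (d f))
    (hD_Y : ∀ (i j : Fin n) (k : ℕ),
      D (X (Sum.inl (i, j, k))) = X (Sum.inl (i, j, k + 1)))
    (hD_X : ∀ i j : Fin n,
      D (X (Sum.inr (i, j))) = ∑ l : Fin n, X (Sum.inl (i, l, 0)) * X (Sum.inr (l, j)))
    (p q : Rgen F n) (hp : p ≠ 0) (hDp : D p = q * p) :
    ∃ (a : ℕ) (l : F), l ≠ 0 ∧ p = C l * detX F n ^ a ∧
      q = C (d l / l) + a • ∑ i : Fin n, X (Sum.inl (i, i, (0 : ℕ))) := by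
  let δ : Derivation ℤ (Rgen F n) (Rgen F n) :=
    Derivation.mk' (AddMonoidHom.mk' D hD_add).toIntLinearMap fun a b => by
      change D (a * b) = a * D b + b * D a
      rw [hD_mul]
      ring
  have hY := pderiv_inl_eq_zero_of_darboux δ hD_C hD_Y hD_X hDp
  have hE (i j : Fin n) : ∃ c, rowOp F i j p = c * p := by
    have h := pderiv_inl_zero_comm δ hD_C hD_Y hD_X i j p
    rw [show δ p = q * p from hDp, pderiv_mul, hY, map_zero, mul_zero, add_zero, zero_add] at h
    exact ⟨_, h.symm⟩
  obtain ⟨a, ha⟩ := exists_nat_rowOp_eq hn hp hE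
  obtain ⟨l, hl⟩ := exists_eq_C_mul_detX_pow (fun v => hY v.1 v.2.1 v.2.2) ha
  have hl0 : l ≠ 0 := by
    rintro rfl
    simp [hl] at hp
  refine ⟨a, l, hl0, hl, mul_right_cancel₀ hp ?_⟩
  have hdet : δ (detX F n) = (∑ i : Fin n, X (Sum.inl (i, i, 0))) * detX F n :=
    δ.map_det_of_map_eq_mul _ (Matrix.of fun i j => X (Sum.inl (i, j, 0))) hD_X
  have hpow : δ (detX F n ^ a) =
      (a • ∑ i : Fin n, X (Sum.inl (i, i, 0))) * detX F n ^ a := by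
    rw [Derivation.leibniz_pow, hdet]
    rcases a with _ | a
    · simp
    · simp only [Nat.add_sub_cancel, nsmul_eq_mul, smul_eq_mul]
      ring
  have hdl : C (d l) = (C (d l / l) * C l : Rgen F n) := by
    rw [← C_mul, div_mul_cancel₀ _ hl0]
  rw [← hDp, hl, hD_mul, hD_C, show D (detX F n ^ a) = _ from hpow, hdl]
  ring
end
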